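/- (Hardy–Littlewood–Pólya) Let M > 0, let 0 < q₁ ≤ q₂, and let f, g ∈ L^{q₂}([0, M]) with decreasing rearrangements f* and g*. If ∫₀^s (f*(t))^{q₁} dt ≤ ∫₀^s (g*(t))^{q₁} dt for all 0 ≤ s ≤ M, then ∫₀^M |f|^{q₂} ds ≤ ∫₀^M |g|^{q₂} ds. -/

import Mathlib

open MeasureTheory Metric Set
open scoped ENNReal NNReal Pointwise

noncomputable section

/-- A bounded set `Ω ⊆ ℝⁿ` has `C¹` boundary if every boundary point admits a local `C¹`
defining function with nonvanishing gradient. -/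
def HasC1Boundary {n : ℕ} (Ω : Set (EuclideanSpace ℝ (Fin n))) : Prop :=
  ∀ x ∈ frontier Ω, ∃ (U : Set (EuclideanSpace ℝ (Fin n)))
    (f : EuclideanSpace ℝ (Fin n) → ℝ),
      IsOpen U ∧ x ∈ U ∧ ContDiff ℝ 1 f ∧ (∀ y ∈ U, fderiv ℝ f y ≠ 0) ∧
      Ω ∩ U = {y | y ∈ U ∧ f y < 0}

/-- Admissible (nontrivial) test functions for the Sobolev quotient on `Ω`; these form a dense
subclass of `W₀^{1,2}(Ω) \ {0}`. -/
def Admissible {n : ℕ} (Ω : Set (EuclideanSpace ℝ (Fin n)))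
    (f : EuclideanSpace ℝ (Fin n) → ℝ) : Prop :=
  ContDiff ℝ 1 f ∧ HasCompactSupport f ∧ tsupport f ⊆ Ω ∧ ∃ x, f x ≠ 0

/-- The Sobolev quotient `Φ_p(f) = ∫_Ω |∇f|² dm / (∫_Ω |f|^p dm)^{2/p}`. -/
def sobolevQuotient {n : ℕ} (p : ℝ) (Ω : Set (EuclideanSpace ℝ (Fin n)))
    (f : EuclideanSpace ℝ (Fin n) → ℝ) : ℝ :=
  (∫ x in Ω, ‖fderiv ℝ f x‖ ^ 2) / (∫ x in Ω, |f x| ^ p) ^ (2 / p)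

/-- The Sobolev constant `C_p(Ω)`. -/
def sobolevConstant {n : ℕ} (p : ℝ) (Ω : Set (EuclideanSpace ℝ (Fin n))) : ℝ :=
  sInf (sobolevQuotient p Ω '' {f | Admissible Ω f})

/-- `u` is a positive extremal function realizing `C_p(Ω)`. -/
def IsExtremal {n : ℕ} (p : ℝ) (Ω : Set (EuclideanSpace ℝ (Fin n)))
    (u : EuclideanSpace ℝ (Fin n) → ℝ) : Prop :=
  Admissible Ω u ∧ (∀ x ∈ Ω, 0 < u x) ∧
    sobolevQuotient p Ω u = sobolevConstant p Ω

/-- The distribution function `μ(t) = |{x ∈ Ω : u(x) > t}|`. -/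
def distFun {n : ℕ} (Ω : Set (EuclideanSpace ℝ (Fin n)))
    (u : EuclideanSpace ℝ (Fin n) → ℝ) (t : ℝ) : ℝ :=
  (volume {x | x ∈ Ω ∧ t < u x}).toReal

/-- The decreasing rearrangement `u*(s) = inf{t ≥ 0 : μ(t) < s}`. -/
def decRearrangement {n : ℕ} (Ω : Set (EuclideanSpace ℝ (Fin n)))
    (u : EuclideanSpace ℝ (Fin n) → ℝ) (s : ℝ) : ℝ :=
  sInf {t : ℝ | 0 ≤ t ∧ distFun Ω u t < s}

/-- `ω_n`, the volume of the unit ball in `ℝⁿ`. -/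
def unitBallVol (n : ℕ) : ℝ :=
  (volume (ball (0 : EuclideanSpace ℝ (Fin n)) 1)).toReal

/-- The Laplacian `Δf = ∑ᵢ ∂²f/∂xᵢ²`. -/
def laplacian {n : ℕ} (f : EuclideanSpace ℝ (Fin n) → ℝ)
    (x : EuclideanSpace ℝ (Fin n)) : ℝ :=
  ∑ i : Fin n, fderiv ℝ (fun y => fderiv ℝ f y (EuclideanSpace.single i 1)) x
    (EuclideanSpace.single i 1)

/-- The distribution function of a function `f` on the interval `[0, M]`. -/
def distFun1D (M : ℝ) (f : ℝ → ℝ) (t : ℝ) : ℝ :=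
  (volume {s | s ∈ Icc 0 M ∧ t < |f s|}).toReal

/-- The decreasing rearrangement of a function `f` on the interval `[0, M]`. -/
def decRearr1D (M : ℝ) (f : ℝ → ℝ) (s : ℝ) : ℝ :=
  sInf {t : ℝ | 0 ≤ t ∧ distFun1D M f t < s}

lemma hlp_dist_eq (M : ℝ) (f : ℝ → ℝ) (t : ℝ) :
    distFun1D M f t = ((volume.restrict (Icc (0 : ℝ) M)) {s | t < |f s|}).toReal := by
  rw [Measure.restrict_apply' measurableSet_Icc, distFun1D]
  congr 2
  ext s
  simp [and_comm]

lemma hlp_dist_anti (M : ℝ) (f : ℝ → ℝ) : Antitone (distFun1D M f) := by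
  intro a b hab
  rw [hlp_dist_eq, hlp_dist_eq]
  apply ENNReal.toReal_mono (measure_ne_top _ _)
  apply measure_mono
  intro s hs
  exact lt_of_le_of_lt hab hs

lemma hlp_dist_le (M : ℝ) (hM : 0 < M) (f : ℝ → ℝ) (t : ℝ) : distFun1D M f t ≤ M := by
  rw [hlp_dist_eq]
  have h1 : (volume.restrict (Icc (0 : ℝ) M)) {s | t < |f s|} ≤ ENNReal.ofReal M := by
    refine (measure_mono (subset_univ _)).trans ?_
    simp
  have := ENNReal.toReal_mono ENNReal.ofReal_ne_top h1
  rwa [ENNReal.toReal_ofReal hM.le] at this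

lemma hlp_dist_small (M : ℝ) (f : ℝ → ℝ)
    (hf : AEMeasurable f (volume.restrict (Icc (0 : ℝ) M))) (s : ℝ) (hs : 0 < s) :
    ∃ t : ℝ, 0 ≤ t ∧ distFun1D M f t < s := by
  have hT := tendsto_measure_iInter_atTop (μ := volume.restrict (Icc (0 : ℝ) M))
    (s := fun n : ℕ => {x | (n : ℝ) < |f x|})
    (fun n => nullMeasurableSet_lt aemeasurable_const (hf.abs))
    (fun a b hab x hx => by
      have hx' : (b : ℝ) < |f x| := hx
      have hab' : (a : ℝ) ≤ b := Nat.cast_le.2 hab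
      exact lt_of_le_of_lt hab' hx')
    ⟨0, measure_ne_top _ _⟩
  have he : (⋂ n : ℕ, {x | (n : ℝ) < |f x|}) = ∅ := by
    ext x
    simp only [mem_iInter, mem_setOf_eq, mem_empty_iff_false, iff_false, not_forall, not_lt]
    exact exists_nat_ge _
  rw [he, measure_empty] at hT
  have hs' : (0 : ℝ≥0∞) < ENNReal.ofReal s := by simpa using hs
  obtain ⟨n, hn⟩ := (hT.eventually (gt_mem_nhds hs')).exists
  refine ⟨n, Nat.cast_nonneg n, ?_⟩
  rw [hlp_dist_eq]
  exact (ENNReal.lt_ofReal_iff_toReal_lt (measure_ne_top _ _)).1 hn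

lemma hlp_dist_right (M : ℝ) (f : ℝ → ℝ) (s t : ℝ) (hs : 0 < s) (h : s < distFun1D M f t) :
    ∃ t' : ℝ, t < t' ∧ s < distFun1D M f t' := by
  have hT := tendsto_measure_iUnion_atTop (μ := volume.restrict (Icc (0 : ℝ) M))
    (s := fun n : ℕ => {x | t + 1 / ((n : ℝ) + 1) < |f x|})
    (fun a b hab x hx => by
      have hx' : t + 1 / ((a : ℝ) + 1) < |f x| := hx
      have : (1 : ℝ) / ((b : ℝ) + 1) ≤ 1 / ((a : ℝ) + 1) := Nat.one_div_le_one_div hab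
      show t + 1 / ((b : ℝ) + 1) < |f x|
      linarith)
  have he : (⋃ n : ℕ, {x | t + 1 / ((n : ℝ) + 1) < |f x|}) = {x | t < |f x|} := by
    ext x
    simp only [mem_iUnion, mem_setOf_eq]
    constructor
    · rintro ⟨n, hn⟩
      have : (0 : ℝ) < 1 / ((n : ℝ) + 1) := Nat.one_div_pos_of_nat
      linarith
    · intro hx
      obtain ⟨n, hn⟩ := exists_nat_one_div_lt (sub_pos.2 hx)
      exact ⟨n, by linarith⟩
  rw [he] at hT
  rw [hlp_dist_eq] at h
  have h' := (ENNReal.ofReal_lt_iff_lt_toReal hs.le (measure_ne_top _ _)).2 h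
  obtain ⟨n, hn⟩ := (hT.eventually (lt_mem_nhds h')).exists
  refine ⟨t + 1 / ((n : ℝ) + 1), ?_, ?_⟩
  · have : (0 : ℝ) < 1 / ((n : ℝ) + 1) := Nat.one_div_pos_of_nat
    linarith
  · rw [hlp_dist_eq]
    exact (ENNReal.ofReal_lt_iff_lt_toReal hs.le (measure_ne_top _ _)).1 hn

lemma hlp_nonneg (M : ℝ) (f : ℝ → ℝ) (s : ℝ) : 0 ≤ decRearr1D M f s :=
  Real.sInf_nonneg (fun _ hx => hx.1)

lemma hlp_anti (M : ℝ) (f : ℝ → ℝ)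
    (hf : AEMeasurable f (volume.restrict (Icc (0 : ℝ) M))) :
    AntitoneOn (decRearr1D M f) (Ioc 0 M) := by
  intro a ha b hb hab
  apply csInf_le_csInf ⟨0, fun x hx => hx.1⟩ (hlp_dist_small M f hf a ha.1)
  exact fun t ht => ⟨ht.1, lt_of_lt_of_le ht.2 hab⟩

lemma hlp_meas (M : ℝ) (f : ℝ → ℝ)
    (hf : AEMeasurable f (volume.restrict (Icc (0 : ℝ) M))) :
    AEMeasurable (decRearr1D M f) (volume.restrict (Ioc 0 M)) :=
  aemeasurable_restrict_of_antitoneOn measurableSet_Ioc (hlp_anti M f hf)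

lemma hlp_equi (M : ℝ) (hM : 0 < M) (f : ℝ → ℝ)
    (hf : AEMeasurable f (volume.restrict (Icc (0 : ℝ) M))) (t : ℝ) (ht : 0 ≤ t) :
    (volume.restrict (Ioc (0 : ℝ) M)) {s | t < decRearr1D M f s} =
      (volume.restrict (Icc (0 : ℝ) M)) {s | t < |f s|} := by
  have hR : (volume.restrict (Icc (0 : ℝ) M)) {s | t < |f s|} =
      ENNReal.ofReal (distFun1D M f t) := by
    rw [hlp_dist_eq, ENNReal.ofReal_toReal (measure_ne_top _ _)]
  rw [hR, Measure.restrict_apply' measurableSet_Ioc]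
  have hle := hlp_dist_le M hM f t
  apply le_antisymm
  · calc volume ({s | t < decRearr1D M f s} ∩ Ioc 0 M)
        ≤ volume (Ioc 0 (distFun1D M f t)) := by
          apply measure_mono
          rintro s ⟨hs, hs2⟩
          refine ⟨hs2.1, ?_⟩
          by_contra hc
          push Not at hc
          have : decRearr1D M f s ≤ t := csInf_le ⟨0, fun x hx => hx.1⟩ ⟨ht, hc⟩
          exact absurd hs (not_lt.2 this)
      _ = _ := by simp
  · calc ENNReal.ofReal (distFun1D M f t) = volume (Ioo 0 (distFun1D M f t)) := by simp
      _ ≤ _ := by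
          apply measure_mono
          rintro s ⟨hs, hs2⟩
          refine ⟨?_, hs, hs2.le.trans hle⟩
          obtain ⟨t', h1, h2⟩ := hlp_dist_right M f s t hs hs2
          refine lt_of_lt_of_le h1 ?_
          apply le_csInf (hlp_dist_small M f hf s hs)
          intro u hu
          by_contra hc
          push Not at hc
          have := hlp_dist_anti M f hc.le
          linarith [hu.2]

lemma hlp_lint (M : ℝ) (hM : 0 < M) (f : ℝ → ℝ)
    (hf : AEMeasurable f (volume.restrict (Icc (0 : ℝ) M))) (r : ℝ) (hr : 0 < r) :
    ∫⁻ s in Ioc 0 M, ENNReal.ofReal (decRearr1D M f s ^ r) =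
      ∫⁻ s in Icc 0 M, ENNReal.ofReal (|f s| ^ r) := by
  rw [lintegral_rpow_eq_lintegral_meas_lt_mul _
      (Filter.Eventually.of_forall (fun s => hlp_nonneg M f s)) (hlp_meas M f hf) hr,
    lintegral_rpow_eq_lintegral_meas_lt_mul _
      (Filter.Eventually.of_forall (fun s => abs_nonneg (f s))) hf.abs hr]
  congr 1
  apply setLIntegral_congr_fun measurableSet_Ioi
  intro t ht
  simp only
  rw [hlp_equi M hM f hf t (le_of_lt ht)]

lemma hlp_integrable (M : ℝ) (hM : 0 < M) (f : ℝ → ℝ) (r q : ℝ) (hr : 0 < r) (hrq : r ≤ q)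
    (hf : MemLp f (ENNReal.ofReal q) (volume.restrict (Icc (0 : ℝ) M))) :
    Integrable (fun s => |f s| ^ r) (volume.restrict (Icc (0 : ℝ) M)) ∧
    Integrable (fun s => decRearr1D M f s ^ r) (volume.restrict (Ioc (0 : ℝ) M)) := by
  have hm := hf.aestronglyMeasurable.aemeasurable
  have h1 : MemLp f (ENNReal.ofReal r) (volume.restrict (Icc (0 : ℝ) M)) :=
    hf.mono_exponent (ENNReal.ofReal_le_ofReal hrq)
  have h2 := h1.integrable_norm_rpow (by simpa using hr) ENNReal.ofReal_ne_top
  rw [ENNReal.toReal_ofReal hr.le] at h2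
  simp only [Real.norm_eq_abs] at h2
  refine ⟨h2, ((hlp_meas M f hm).pow_const r).aestronglyMeasurable, ?_⟩
  rw [hasFiniteIntegral_iff_ofReal
    (Filter.Eventually.of_forall (fun s => Real.rpow_nonneg (hlp_nonneg M f s) r)),
    hlp_lint M hM f hm r hr,
    ← hasFiniteIntegral_iff_ofReal
    (Filter.Eventually.of_forall (fun s => Real.rpow_nonneg (abs_nonneg (f s)) r))]
  exact h2.2

lemma hlp_int_eq (M : ℝ) (hM : 0 < M) (f : ℝ → ℝ) (q : ℝ) (hq : 0 < q)
    (hf : MemLp f (ENNReal.ofReal q) (volume.restrict (Icc (0 : ℝ) M))) :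
    ∫ s in (0 : ℝ)..M, |f s| ^ q = ∫ s in Ioc 0 M, decRearr1D M f s ^ q := by
  obtain ⟨h1, h2⟩ := hlp_integrable M hM f q q hq le_rfl hf
  have hm := hf.aestronglyMeasurable.aemeasurable
  rw [intervalIntegral.integral_of_le hM.le, ← integral_Icc_eq_integral_Ioc,
    integral_eq_lintegral_of_nonneg_ae
    (Filter.Eventually.of_forall (fun s => Real.rpow_nonneg (abs_nonneg (f s)) q)) h1.1,
    integral_eq_lintegral_of_nonneg_ae
    (Filter.Eventually.of_forall (fun s => Real.rpow_nonneg (hlp_nonneg M f s) q)) h2.1,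
    hlp_lint M hM f hm q hq]

/-- Comparison of weighted integrals against a nonincreasing weight. -/
lemma hlp_weight (M : ℝ) (A B w : ℝ → ℝ) (hw : ∀ s, 0 ≤ w s)
    (hwa : AntitoneOn w (Ioc 0 M)) (hA : ∀ s, 0 ≤ A s) (hB : ∀ s, 0 ≤ B s)
    (hAi : Integrable A (volume.restrict (Ioc (0 : ℝ) M)))
    (hBi : Integrable B (volume.restrict (Ioc (0 : ℝ) M)))
    (h : ∀ s : ℝ, 0 ≤ s → s ≤ M → ∫ t in (0 : ℝ)..s, A t ≤ ∫ t in (0 : ℝ)..s, B t) :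
    ∫⁻ s in Ioc 0 M, ENNReal.ofReal (A s * w s) ≤
      ∫⁻ s in Ioc 0 M, ENNReal.ofReal (B s * w s) := by
  have hwm : AEMeasurable w (volume.restrict (Ioc 0 M)) :=
    aemeasurable_restrict_of_antitoneOn measurableSet_Ioc hwa
  have key : ∀ C : ℝ → ℝ, (∀ s, 0 ≤ C s) → Integrable C (volume.restrict (Ioc (0 : ℝ) M)) →
      ∫⁻ s in Ioc 0 M, ENNReal.ofReal (C s * w s) =
      ∫⁻ u in Ioi (0 : ℝ), ∫⁻ s in ({s | u < w s} ∩ Ioc 0 M), ENNReal.ofReal (C s) := by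
    intro C hC hCi
    have hCm : AEMeasurable (fun s => ENNReal.ofReal (C s)) (volume.restrict (Ioc (0 : ℝ) M)) :=
      hCi.1.aemeasurable.ennreal_ofReal
    have h1 := lintegral_withDensity_eq_lintegral_mul₀ hCm hwm.ennreal_ofReal
    have h2 := lintegral_eq_lintegral_meas_lt
      ((volume.restrict (Ioc (0 : ℝ) M)).withDensity (fun s => ENNReal.ofReal (C s)))
      (Filter.Eventually.of_forall hw)
      (hwm.mono_ac (withDensity_absolutelyContinuous _ _))
    rw [h1] at h2
    simp only [withDensity_apply', Measure.restrict_restrict' measurableSet_Ioc] at h2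
    rw [← h2]
    apply lintegral_congr
    intro s
    simp [ENNReal.ofReal_mul (hC s)]
  have hint : ∀ C : ℝ → ℝ, (∀ s, 0 ≤ C s) → Integrable C (volume.restrict (Ioc (0 : ℝ) M)) →
      ∀ s : ℝ, 0 ≤ s → s ≤ M →
      ∫⁻ t in Ioc 0 s, ENNReal.ofReal (C t) = ENNReal.ofReal (∫ t in (0 : ℝ)..s, C t) := by
    intro C hC hCi s hs hsM
    rw [intervalIntegral.integral_of_le hs, ofReal_integral_eq_lintegral_ofReal _
      (Filter.Eventually.of_forall hC)]
    exact IntegrableOn.mono_set (t := Ioc 0 M) hCi (Ioc_subset_Ioc_right hsM)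
  rw [key A hA hAi, key B hB hBi]
  apply lintegral_mono
  intro u
  set S := {s | u < w s} ∩ Ioc 0 M with hS
  show ∫⁻ s in S, ENNReal.ofReal (A s) ≤ ∫⁻ s in S, ENNReal.ofReal (B s)
  rcases S.eq_empty_or_nonempty with he | hne
  · rw [he]; simp
  have hbd : BddAbove S := ⟨M, fun x hx => hx.2.2⟩
  set b := sSup S with hb
  have hb0 : 0 ≤ b := by
    obtain ⟨x, hx⟩ := hne
    exact hx.2.1.le.trans (le_csSup hbd hx)
  have hbM : b ≤ M := csSup_le hne (fun x hx => hx.2.2)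
  have hs1 : S ⊆ Ioc 0 b := fun x hx => ⟨hx.2.1, le_csSup hbd hx⟩
  have hs2 : Ioo 0 b ⊆ S := by
    intro x hx
    obtain ⟨y, hy, hxy⟩ := exists_lt_of_lt_csSup hne hx.2
    have hxM : x ∈ Ioc 0 M := ⟨hx.1, hx.2.le.trans hbM⟩
    exact ⟨lt_of_lt_of_le hy.1 (hwa hxM hy.2 hxy.le), hxM⟩
  calc ∫⁻ s in S, ENNReal.ofReal (A s) ≤ ∫⁻ s in Ioc 0 b, ENNReal.ofReal (A s) :=
        lintegral_mono_set hs1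
    _ ≤ ∫⁻ s in Ioc 0 b, ENNReal.ofReal (B s) := by
        rw [hint A hA hAi b hb0 hbM, hint B hB hBi b hb0 hbM]
        exact ENNReal.ofReal_le_ofReal (h b hb0 hbM)
    _ = ∫⁻ s in Ioo 0 b, ENNReal.ofReal (B s) := (setLIntegral_congr Ioo_ae_eq_Ioc).symm
    _ ≤ _ := lintegral_mono_set hs2

/-- Hardy–Littlewood–Pólya. Let `M > 0`, `0 < q₁ ≤ q₂`, and
`f, g ∈ L^{q₂}([0,M])` with decreasing rearrangements `f*`, `g*`. If
`∫₀^s (f*)^{q₁} ≤ ∫₀^s (g*)^{q₁}` for all `0 ≤ s ≤ M`, then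
`∫₀^M |f|^{q₂} ≤ ∫₀^M |g|^{q₂}`. -/
theorem hardy_littlewood_polya (M q₁ q₂ : ℝ) (hM : 0 < M)
    (hq1 : 0 < q₁) (hq12 : q₁ ≤ q₂)
    (f g : ℝ → ℝ)
    (hf : MemLp f (ENNReal.ofReal q₂) (volume.restrict (Icc (0 : ℝ) M)))
    (hg : MemLp g (ENNReal.ofReal q₂) (volume.restrict (Icc (0 : ℝ) M)))
    (h : ∀ s : ℝ, 0 ≤ s → s ≤ M →
      ∫ t in (0 : ℝ)..s, decRearr1D M f t ^ q₁ ≤ ∫ t in (0 : ℝ)..s, decRearr1D M g t ^ q₁) :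
    ∫ s in (0 : ℝ)..M, |f s| ^ q₂ ≤ ∫ s in (0 : ℝ)..M, |g s| ^ q₂ := by
  have hq2 : 0 < q₂ := hq1.trans_le hq12
  have hfm := hf.aestronglyMeasurable.aemeasurable
  rw [hlp_int_eq M hM f q₂ hq2 hf, hlp_int_eq M hM g q₂ hq2 hg]
  have hF := (hlp_integrable M hM f q₂ q₂ hq2 le_rfl hf).2
  have hG := (hlp_integrable M hM g q₂ q₂ hq2 le_rfl hg).2
  have hF1 := (hlp_integrable M hM f q₁ q₂ hq1 hq12 hf).2
  have hG1 := (hlp_integrable M hM g q₁ q₂ hq1 hq12 hg).2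
  have hFn := hlp_nonneg M f
  have hGn := hlp_nonneg M g
  set F := decRearr1D M f
  set G := decRearr1D M g
  have hd : 0 ≤ q₂ - q₁ := sub_nonneg.2 hq12
  have hW := hlp_weight M (fun s => F s ^ q₁) (fun s => G s ^ q₁) (fun s => F s ^ (q₂ - q₁))
    (fun s => Real.rpow_nonneg (hFn s) _)
    (fun a ha b hb hab => Real.rpow_le_rpow (hFn b) (hlp_anti M f hfm ha hb hab) hd)
    (fun s => Real.rpow_nonneg (hFn s) _) (fun s => Real.rpow_nonneg (hGn s) _) hF1 hG1 h
  have e1 : ∀ s, F s ^ q₁ * F s ^ (q₂ - q₁) = F s ^ q₂ := by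
    intro s
    rw [← Real.rpow_add_of_nonneg (hFn s) hq1.le hd]
    congr 1
    ring
  have young : ∀ s, G s ^ q₁ * F s ^ (q₂ - q₁) ≤
      (q₁ / q₂) * G s ^ q₂ + ((q₂ - q₁) / q₂) * F s ^ q₂ := by
    intro s
    have := Real.geom_mean_le_arith_mean2_weighted (w₁ := q₁ / q₂) (w₂ := (q₂ - q₁) / q₂)
      (p₁ := G s ^ q₂) (p₂ := F s ^ q₂) (by positivity) (by positivity)
      (Real.rpow_nonneg (hGn s) _) (Real.rpow_nonneg (hFn s) _) (by field_simp; ring)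
    rw [← Real.rpow_mul (hGn s), ← Real.rpow_mul (hFn s), mul_div_cancel₀ _ hq2.ne',
      mul_div_cancel₀ _ hq2.ne'] at this
    exact this
  simp only [e1] at hW
  have hR : Integrable (fun s => (q₁ / q₂) * G s ^ q₂ + ((q₂ - q₁) / q₂) * F s ^ q₂)
      (volume.restrict (Ioc (0 : ℝ) M)) := (hG.const_mul _).add (hF.const_mul _)
  have hRn : ∀ s, 0 ≤ (q₁ / q₂) * G s ^ q₂ + ((q₂ - q₁) / q₂) * F s ^ q₂ := by
    intro s
    have h1 := Real.rpow_nonneg (hGn s) q₂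
    have h2 := Real.rpow_nonneg (hFn s) q₂
    positivity
  have hfin := hW.trans (lintegral_mono (fun s => ENNReal.ofReal_le_ofReal (young s)))
  rw [← ofReal_integral_eq_lintegral_ofReal hF
      (Filter.Eventually.of_forall (fun s => Real.rpow_nonneg (hFn s) _)),
    ← ofReal_integral_eq_lintegral_ofReal hR (Filter.Eventually.of_forall hRn),
    ENNReal.ofReal_le_ofReal_iff (integral_nonneg hRn),
    integral_add (hG.const_mul _) (hF.const_mul _), integral_const_mul, integral_const_mul] at hfin
  set X := ∫ s in Ioc 0 M, F s ^ q₂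
  set Y := ∫ s in Ioc 0 M, G s ^ q₂
  have e2 : q₁ / q₂ * Y + (q₂ - q₁) / q₂ * X = X + q₁ / q₂ * (Y - X) := by
    field_simp
    ring
  rw [e2] at hfin
  have h3 : 0 ≤ q₁ / q₂ * (Y - X) := by linarith
  have h4 : 0 < q₁ / q₂ := by positivity
  have h5 := nonneg_of_mul_nonneg_right h3 h4
  linarith
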